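/- (Transposition cipher, equivocation bounds.) Let M be a finite alphabet with |M| ≥ 2 and probability distribution P_M, let d ≥ 2, and consider the alphabet M^d with the product distribution P(m_1…m_d) = ∏ P_M(m_i) and key space K = {T_π : π ∈ Sym({1,…,d})} ≤ Sym(M^d), where T_π(m_1…m_d) = m_{π(1)}…m_{π(d)} and keys are uniform. Set R₃ = Σ_{j ∈ M} P_M(j)². Then for every k ≥ 1, messages of length L = k·d over M (viewed as length-k messages over M^d) satisfy log(2) · R₃^k ≤ H(K | M^{kd} C^{kd}) ≤ log(d!) · (d(d−1)/2) · R₃^k. -/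

import Mathlib

open scoped Classical

noncomputable section

/-- Probability of a word under the i.i.d. extension of the symbol distribution `P`. -/
def wordP {M : Type*} (P : M → ℝ) {L : ℕ} (m : Fin L → M) : ℝ := ∏ l, P (m l)

/-- Number of keys in `K` mapping the message `m` (letterwise) to the cryptogram `c`. -/
def keyCount {M : Type*} (K : Subgroup (Equiv.Perm M)) {L : ℕ} (m c : Fin L → M) : ℕ :=
  Nat.card {k : Equiv.Perm M // k ∈ K ∧ ∀ l, k (m l) = c l}

/-- The key appearance equivocation `H(K | M^L C^L)` for the substitution cipher with
key space `K` (keys uniform), symbol distribution `P` and message length `L`. -/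
def kae {M : Type*} [Fintype M] (K : Subgroup (Equiv.Perm M)) (P : M → ℝ) (L : ℕ) : ℝ :=
  ∑ m : Fin L → M, ∑ c : Fin L → M,
    wordP P m * (keyCount K m c : ℝ) / (Nat.card K : ℝ) * Real.log (keyCount K m c)

/-- The fixed set `F(π)` of a permutation. -/
def fixedSet {M : Type*} [Fintype M] [DecidableEq M] (π : Equiv.Perm M) : Finset M :=
  Finset.univ.filter fun j => π j = j

/-- `P_π`: total probability of the fixed set of `π`. -/
def Pfix {M : Type*} [Fintype M] [DecidableEq M] (P : M → ℝ) (π : Equiv.Perm M) : ℝ :=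
  ∑ j ∈ fixedSet π, P j

/-- A key is maximal if it is a non-identity element of `K` whose fixed set is maximal
under inclusion among fixed sets of non-identity elements of `K`. -/
def IsMaximalKey {M : Type*} [Fintype M] [DecidableEq M] (K : Subgroup (Equiv.Perm M))
    (π : Equiv.Perm M) : Prop :=
  π ∈ K ∧ π ≠ 1 ∧ ∀ τ ∈ K, τ ≠ 1 → fixedSet π ⊆ fixedSet τ → fixedSet τ = fixedSet π

/-- The stabilizer of the message `m` in `K` is nontrivial. -/
def hasNontrivialStab {M : Type*} (K : Subgroup (Equiv.Perm M)) {L : ℕ} (m : Fin L → M) : Prop :=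
  ∃ k ∈ K, k ≠ 1 ∧ ∀ l, k (m l) = m l

/-- Total probability of length-`L` messages with a nontrivial stabilizer in `K`. -/
def probNontrivial {M : Type*} [Fintype M] (K : Subgroup (Equiv.Perm M)) (P : M → ℝ)
    (L : ℕ) : ℝ :=
  ∑ m : Fin L → M, if hasNontrivialStab K m then wordP P m else 0

/-- The group homomorphism sending a permutation of positions to the induced permutation of
words: `(posHom M d π) m = m ∘ π.symm`; in particular `posHom M d τ⁻¹` is the map
`T_τ : (m_1 … m_d) ↦ (m_{τ(1)} … m_{τ(d)})`, and the range of `posHom M d` is exactly the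
group `{T_π : π ∈ Sym({1,…,d})}` of position permutations. -/
def posHom (M : Type*) (d : ℕ) : Equiv.Perm (Fin d) →* Equiv.Perm (Fin d → M) where
  toFun π := Equiv.arrowCongr π (Equiv.refl M)
  map_one' := by ext f i; rfl
  map_mul' := fun π ρ => by ext f i; simp [Equiv.Perm.mul_def]

/-!
The keys carrying `m` to `c` form a coset of the stabilizer of `m` as soon as there is one, so the
equivocation is the mean of `log |Stab m|`. Since `|Stab m|` is `1`, or else lies between `2` and
`|K|`, the equivocation is comparable to the probability that `m` has a nontrivial stabilizer.

A fixed key `σ` stabilizes a message of length `L` with probability `(Pfix P σ) ^ L`. For position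
permutations, every word fixed by some `π ≠ 1` is fixed by the transposition of `i` and `π i` for
any `i` moved by `π`, so a union bound over the `d (d - 1) / 2` transpositions suffices; each of
them fixes exactly the words with equal letters at two given positions, which have total
probability `∑ j, P j ^ 2`.
-/

section FiniteSums

open Finset

theorem card_filter_fst_lt_snd (α : Type*) [Fintype α] [LinearOrder α] :
    #{p : α × α | p.1 < p.2} = (Fintype.card α).choose 2 := by
  have card_gt : #{p : α × α | p.2 < p.1} = #{p : α × α | p.1 < p.2} :=
    card_equiv (Equiv.prodComm α α) (by simp)
  have card_ne : #{p : α × α | p.1 < p.2 ∨ p.2 < p.1} = 2 * #{p : α × α | p.1 < p.2} := by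
    rw [filter_or, card_union_of_disjoint, card_gt, two_mul]
    exact disjoint_filter.2 fun _ _ => lt_asymm
  have offDiag_eq : (univ : Finset α).offDiag = univ.filter fun p => p.1 < p.2 ∨ p.2 < p.1 := by
    ext p
    simp [lt_or_lt_iff_ne]
  rw [← offDiag_eq, offDiag_card, card_univ, ← Nat.mul_sub_one] at card_ne
  rw [Nat.choose_two_right, card_ne, Nat.mul_div_cancel_left _ two_pos]

variable {ι M R : Type*} [Fintype ι] [DecidableEq ι] [Fintype M] [DecidableEq M] [CommSemiring R]
  {P : M → R}

theorem sum_prod_filter_forall_mem_eq (hsum : ∑ x, P x = 1) (s : Finset ι) (a : M) :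
    ∑ w : ι → M with ∀ t ∈ s, w t = a, ∏ t, P (w t) = P a ^ #s := by
  have filter_eq : ({w : ι → M | ∀ t ∈ s, w t = a} : Finset (ι → M)) =
      Fintype.piFinset fun t => if t ∈ s then {a} else univ := by
    ext w
    simp only [mem_filter_univ, Fintype.mem_piFinset]
    refine forall_congr' fun t => ?_
    by_cases ht : t ∈ s <;> simp [ht]
  have sum_letter (t : ι) :
      ∑ x ∈ (if t ∈ s then {a} else univ), P x = if t ∈ s then P a else 1 := by
    split_ifs
    · exact sum_singleton P a
    · exact hsum
  rw [filter_eq, ← prod_univ_sum, prod_congr rfl fun t _ => sum_letter t]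
  simp

theorem sum_prod_filter_apply_eq_apply (hsum : ∑ x, P x = 1) {i j : ι} (hij : i ≠ j) :
    ∑ w : ι → M with w i = w j, ∏ t, P (w t) = ∑ a, P a ^ 2 := by
  rw [← sum_fiberwise _ fun w : ι → M => w i]
  refine sum_congr rfl fun a _ => ?_
  rw [← card_pair hij, ← sum_prod_filter_forall_mem_eq hsum, filter_filter]
  refine sum_congr (filter_congr fun w _ => ?_) fun _ _ => rfl
  simp only [mem_insert, mem_singleton, forall_eq_or_imp, forall_eq]
  grind

end FiniteSums

section SubstitutionCipher

open Finset MulAction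

theorem wordP_nonneg {A : Type*} {P : A → ℝ} (hP : ∀ x, 0 ≤ P x) {L : ℕ} (m : Fin L → A) :
    0 ≤ wordP P m :=
  prod_nonneg fun _ _ => hP _

variable {A : Type*} (K : Subgroup (Equiv.Perm A)) {L : ℕ} (m : Fin L → A)

theorem keyCount_eq_card_smul_eq (c : Fin L → A) :
    keyCount K m c = Nat.card {κ : K // κ • m = c} :=
  Nat.card_congr
    { toFun := fun κ => ⟨⟨κ.1, κ.2.1⟩, funext κ.2.2⟩
      invFun := fun κ => ⟨κ.1.1, κ.1.2, congrFun κ.2⟩ }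

theorem keyCount_smul_eq_card_stabilizer (g : K) :
    keyCount K m (g • m) = Nat.card (stabilizer K m) := by
  rw [keyCount_eq_card_smul_eq]
  refine Nat.card_congr ((Equiv.mulLeft g⁻¹).subtypeEquiv fun κ => ?_)
  rw [Equiv.coe_mulLeft, mem_stabilizer_iff, mul_smul, inv_smul_eq_iff]

theorem keyCount_eq_zero_or_eq_card_stabilizer (c : Fin L → A) :
    keyCount K m c = 0 ∨ keyCount K m c = Nat.card (stabilizer K m) := by
  by_cases hc : ∃ g : K, g • m = c
  · obtain ⟨g, rfl⟩ := hc
    exact .inr (keyCount_smul_eq_card_stabilizer K m g)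
  · have : IsEmpty {κ : K // κ • m = c} := isEmpty_subtype _ |>.2 (not_exists.1 hc)
    exact .inl ((keyCount_eq_card_smul_eq K m c).trans Nat.card_of_isEmpty)

variable {K m} in
theorem hasNontrivialStab_iff_stabilizer_ne_bot : hasNontrivialStab K m ↔ stabilizer K m ≠ ⊥ := by
  rw [← Subgroup.nontrivial_iff_ne_bot, Subgroup.nontrivial_iff_exists_ne_one]
  constructor
  · rintro ⟨κ, hκ, hκ_ne, hκ_fix⟩
    exact ⟨⟨κ, hκ⟩, funext hκ_fix, mt (congrArg Subtype.val) hκ_ne⟩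
  · rintro ⟨κ, hκ_fix, hκ_ne⟩
    exact ⟨κ, κ.2, mt OneMemClass.coe_eq_one.1 hκ_ne, congrFun hκ_fix⟩

variable [Fintype A]

theorem sum_keyCount : ∑ c : Fin L → A, keyCount K m c = Nat.card K := by
  simp only [keyCount_eq_card_smul_eq]
  rw [← Nat.card_sigma]
  exact Nat.card_congr (Equiv.sigmaFiberEquiv fun κ : K => κ • m)

theorem kae_eq_sum_wordP_mul_log_card_stabilizer (P : A → ℝ) (L : ℕ) :
    kae K P L = ∑ m : Fin L → A, wordP P m * Real.log (Nat.card (stabilizer K m)) := by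
  refine sum_congr rfl fun m _ => ?_
  have card_ne_zero : (Nat.card K : ℝ) ≠ 0 := Nat.cast_ne_zero.2 Nat.card_pos.ne'
  calc ∑ c, wordP P m * keyCount K m c / Nat.card K * Real.log (keyCount K m c)
      = ∑ c, wordP P m * Real.log (Nat.card (stabilizer K m)) / Nat.card K * keyCount K m c := by
        refine sum_congr rfl fun c _ => ?_
        obtain h | h := keyCount_eq_zero_or_eq_card_stabilizer K m c
        · simp [h]
        · rw [h]
          ring
    _ = wordP P m * Real.log (Nat.card (stabilizer K m)) := by
        rw [← mul_sum, ← Nat.cast_sum, sum_keyCount, div_mul_cancel₀ _ card_ne_zero]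

variable {P : A → ℝ}

theorem probNontrivial_nonneg (hP : ∀ x, 0 ≤ P x) (L : ℕ) : 0 ≤ probNontrivial K P L := by
  rw [probNontrivial, ← sum_filter]
  exact sum_nonneg fun m _ => wordP_nonneg hP m

theorem log_two_mul_probNontrivial_le_kae (hP : ∀ x, 0 ≤ P x) (L : ℕ) :
    Real.log 2 * probNontrivial K P L ≤ kae K P L := by
  rw [kae_eq_sum_wordP_mul_log_card_stabilizer, probNontrivial, mul_sum]
  refine sum_le_sum fun m _ => ?_
  split_ifs with hm
  · have two_le : 2 ≤ Nat.card (stabilizer K m) :=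
      (Subgroup.one_lt_card_iff_ne_bot _).2 (hasNontrivialStab_iff_stabilizer_ne_bot.1 hm)
    rw [mul_comm]
    gcongr
    · exact wordP_nonneg hP m
    · exact_mod_cast two_le
  · rw [mul_zero]
    exact mul_nonneg (wordP_nonneg hP m) (Real.log_natCast_nonneg _)

theorem kae_le_log_card_mul_probNontrivial (hP : ∀ x, 0 ≤ P x) (L : ℕ) :
    kae K P L ≤ Real.log (Nat.card K) * probNontrivial K P L := by
  rw [kae_eq_sum_wordP_mul_log_card_stabilizer, probNontrivial, mul_sum]
  refine sum_le_sum fun m _ => ?_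
  split_ifs with hm
  · rw [mul_comm]
    gcongr
    · exact wordP_nonneg hP m
    · exact_mod_cast Nat.card_pos
    · exact Subgroup.card_le_card_group _
  · have stabilizer_eq_bot : stabilizer K m = ⊥ :=
      not_not.1 (mt hasNontrivialStab_iff_stabilizer_ne_bot.2 hm)
    simp [stabilizer_eq_bot]

variable [DecidableEq A]

theorem Pfix_pow_eq_sum_wordP (P : A → ℝ) (σ : Equiv.Perm A) (L : ℕ) :
    Pfix P σ ^ L = ∑ m : Fin L → A, if ∀ l, m l ∈ fixedSet σ then wordP P m else 0 := by
  rw [Pfix, sum_pow', ← sum_filter]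
  refine sum_congr ?_ fun _ _ => rfl
  ext m
  simp

variable {K}

theorem Pfix_pow_le_probNontrivial (hP : ∀ x, 0 ≤ P x) {σ : Equiv.Perm A} (hσ : σ ∈ K)
    (hσ_ne : σ ≠ 1) (L : ℕ) :
    Pfix P σ ^ L ≤ probNontrivial K P L := by
  rw [Pfix_pow_eq_sum_wordP, probNontrivial, ← sum_filter, ← sum_filter]
  refine sum_le_sum_of_subset_of_nonneg (fun m hm => ?_) fun m _ _ => wordP_nonneg hP m
  simp only [fixedSet, mem_filter_univ] at hm ⊢
  exact ⟨σ, hσ, hσ_ne, hm⟩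

theorem probNontrivial_le_sum_Pfix_pow (hP : ∀ x, 0 ≤ P x) {ι : Type*} (s : Finset ι)
    (σ : ι → Equiv.Perm A)
    (hcover : ∀ τ ∈ K, τ ≠ 1 → ∃ i ∈ s, fixedSet τ ⊆ fixedSet (σ i)) (L : ℕ) :
    probNontrivial K P L ≤ ∑ i ∈ s, Pfix P (σ i) ^ L := by
  simp only [Pfix_pow_eq_sum_wordP]
  rw [sum_comm, probNontrivial]
  refine sum_le_sum fun m _ => ?_
  have summand_nonneg (i : ι) : 0 ≤ if ∀ l, m l ∈ fixedSet (σ i) then wordP P m else 0 := by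
    split_ifs
    exacts [wordP_nonneg hP m, le_rfl]
  split_ifs with hm
  · obtain ⟨τ, hτ, hτ_ne, hτ_fix⟩ := hm
    obtain ⟨i, hi, hsub⟩ := hcover τ hτ hτ_ne
    have fixed_by_i : ∀ l, m l ∈ fixedSet (σ i) := fun l => hsub (by simp [fixedSet, hτ_fix l])
    calc wordP P m = if ∀ l, m l ∈ fixedSet (σ i) then wordP P m else 0 := (if_pos fixed_by_i).symm
      _ ≤ _ := single_le_sum (fun i _ => summand_nonneg i) hi
  · exact sum_nonneg fun i _ => summand_nonneg i

end SubstitutionCipher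

section TranspositionCipher

open Finset Equiv

variable {M : Type*} {d : ℕ}

theorem posHom_apply (π : Perm (Fin d)) (w : Fin d → M) : posHom M d π w = w ∘ π.symm :=
  rfl

theorem posHom_injective (M : Type*) [Nontrivial M] (d : ℕ) :
    Function.Injective (posHom M d) := by
  refine (injective_iff_map_eq_one _).2 fun π hπ => ?_
  obtain ⟨a, b, hab⟩ := exists_pair_ne M
  ext1 i
  by_contra hi
  rw [Perm.one_apply] at hi
  have apply_eq : posHom M d π (Function.update (fun _ => b) i a) (π i) =
      Function.update (fun _ => b) i a (π i) := by
    rw [hπ, Perm.one_apply]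
  rw [posHom_apply, Function.comp_apply, symm_apply_apply, Function.update_self,
    Function.update_of_ne hi] at apply_eq
  exact hab apply_eq

theorem card_range_posHom_le (M : Type*) (d : ℕ) : Nat.card (posHom M d).range ≤ d.factorial := by
  calc Nat.card (posHom M d).range ≤ Nat.card (Perm (Fin d)) :=
        Nat.card_le_card_of_surjective _ (posHom M d).rangeRestrict_surjective
    _ = d.factorial := by rw [Nat.card_perm, Nat.card_fin]

variable [Fintype M]

section FixedWords

variable [DecidableEq M]

theorem mem_fixedSet_posHom {π : Perm (Fin d)} {w : Fin d → M} :
    w ∈ fixedSet (posHom M d π) ↔ ∀ i, w (π i) = w i := by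
  rw [fixedSet, mem_filter_univ, posHom_apply, comp_symm_eq, eq_comm, funext_iff]
  rfl

theorem mem_fixedSet_posHom_swap {i j : Fin d} {w : Fin d → M} :
    w ∈ fixedSet (posHom M d (swap i j)) ↔ w i = w j := by
  rw [mem_fixedSet_posHom]
  refine ⟨fun h => ?_, fun h t => apply_swap_eq_self h t⟩
  rw [← h i, swap_apply_left]

theorem fixedSet_posHom_subset_swap (π : Perm (Fin d)) (i : Fin d) :
    fixedSet (posHom M d π) ⊆ fixedSet (posHom M d (swap (π i) i)) :=
  fun _ hw => mem_fixedSet_posHom_swap.2 (mem_fixedSet_posHom.1 hw i)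

theorem exists_lt_fixedSet_posHom_subset_swap {π : Perm (Fin d)} (hπ : π ≠ 1) :
    ∃ i j, i < j ∧ fixedSet (posHom M d π) ⊆ fixedSet (posHom M d (swap i j)) := by
  obtain ⟨i, hi⟩ : ∃ i, π i ≠ i := DFunLike.ne_iff.1 hπ
  rcases lt_or_gt_of_ne hi with hlt | hlt
  · exact ⟨π i, i, hlt, fixedSet_posHom_subset_swap π i⟩
  · exact ⟨i, π i, hlt, swap_comm (π i) i ▸ fixedSet_posHom_subset_swap π i⟩

theorem Pfix_posHom_swap {P : M → ℝ} (hsum : ∑ x, P x = 1) {i j : Fin d} (hij : i ≠ j) :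
    Pfix (wordP P) (posHom M d (swap i j)) = ∑ a, P a ^ 2 := by
  rw [← sum_prod_filter_apply_eq_apply hsum hij]
  refine sum_congr ?_ fun _ _ => rfl
  ext w
  rw [mem_fixedSet_posHom_swap, mem_filter_univ]

end FixedWords

variable {P : M → ℝ}

theorem pow_le_probNontrivial_range_posHom [Nontrivial M] (hP : ∀ x, 0 ≤ P x)
    (hsum : ∑ x, P x = 1) (hd : 2 ≤ d) (k : ℕ) :
    (∑ a, P a ^ 2) ^ k ≤ probNontrivial (posHom M d).range (wordP P) k := by
  have : Nontrivial (Fin d) := Fin.nontrivial_iff_two_le.2 hd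
  obtain ⟨i, j, hij⟩ := exists_pair_ne (Fin d)
  rw [← Pfix_posHom_swap hsum hij]
  refine Pfix_pow_le_probNontrivial (wordP_nonneg hP) (MonoidHom.mem_range.2 ⟨_, rfl⟩) ?_ k
  rwa [map_ne_one_iff _ (posHom_injective M d), Ne, swap_eq_one_iff]

theorem probNontrivial_range_posHom_le (hP : ∀ x, 0 ≤ P x) (hsum : ∑ x, P x = 1) (d k : ℕ) :
    probNontrivial (posHom M d).range (wordP P) k ≤
      (d * (d - 1) / 2 : ℝ) * (∑ a, P a ^ 2) ^ k := by
  let pairs : Finset (Fin d × Fin d) := {p | p.1 < p.2}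
  have swaps_cover : ∀ τ ∈ (posHom M d).range, τ ≠ 1 →
      ∃ p ∈ pairs, fixedSet τ ⊆ fixedSet (posHom M d (swap p.1 p.2)) := by
    rintro _ ⟨π, rfl⟩ hπ
    obtain ⟨i, j, hij, hsub⟩ := exists_lt_fixedSet_posHom_subset_swap (M := M) (ne_one_of_map hπ)
    exact ⟨(i, j), mem_filter_univ _ |>.2 hij, hsub⟩
  calc probNontrivial (posHom M d).range (wordP P) k
      ≤ ∑ p ∈ pairs, Pfix (wordP P) (posHom M d (swap p.1 p.2)) ^ k :=
        probNontrivial_le_sum_Pfix_pow (wordP_nonneg hP) pairs _ swaps_cover k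
    _ = ∑ _p ∈ pairs, (∑ a, P a ^ 2) ^ k :=
        sum_congr rfl fun p hp => by rw [Pfix_posHom_swap hsum ((mem_filter_univ p).1 hp).ne]
    _ = (d * (d - 1) / 2 : ℝ) * (∑ a, P a ^ 2) ^ k := by
        rw [sum_const, card_filter_fst_lt_snd, Fintype.card_fin, nsmul_eq_mul, Nat.cast_choose_two]

end TranspositionCipher

/-- Transposition cipher, equivocation bounds:
`log 2 · R₃^k ≤ H(K | M^{kd} C^{kd}) ≤ log(d!) · (d(d-1)/2) · R₃^k` with
`R₃ = Σ_{j ∈ M} P(j)²`, where the alphabet is `M^d` with the product distribution and the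
key space is the group of position permutations. -/
theorem kae_bounds_transposition_cipher {M : Type*} [Fintype M] [DecidableEq M]
    (hM : 2 ≤ Fintype.card M) {d : ℕ} (hd : 2 ≤ d)
    (P : M → ℝ) (hP : ∀ x, 0 ≤ P x) (hsum : ∑ x, P x = 1)
    (k : ℕ) (hk : 1 ≤ k) :
    Real.log 2 * (∑ j : M, P j ^ 2) ^ k ≤
        kae (posHom M d).range (fun m : Fin d → M => ∏ i, P (m i)) k ∧
      kae (posHom M d).range (fun m : Fin d → M => ∏ i, P (m i)) k ≤
        Real.log (Nat.factorial d) * (d * (d - 1) / 2) * (∑ j : M, P j ^ 2) ^ k := by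
  have : Nontrivial M := Fintype.one_lt_card_iff_nontrivial.1 hM
  -- The distribution of a single block is `wordP P` by definition.
  have block_nonneg : ∀ w : Fin d → M, 0 ≤ wordP P w := wordP_nonneg hP
  constructor
  · calc Real.log 2 * (∑ j : M, P j ^ 2) ^ k
        ≤ Real.log 2 * probNontrivial (posHom M d).range (wordP P) k := by
          gcongr
          exact pow_le_probNontrivial_range_posHom hP hsum hd k
      _ ≤ kae (posHom M d).range (wordP P) k := log_two_mul_probNontrivial_le_kae _ block_nonneg k
  · calc kae (posHom M d).range (wordP P) k
        ≤ Real.log (Nat.card (posHom M d).range) * probNontrivial (posHom M d).range (wordP P) k :=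
          kae_le_log_card_mul_probNontrivial _ block_nonneg k
      _ ≤ Real.log (Nat.factorial d) * (d * (d - 1) / 2 * (∑ j : M, P j ^ 2) ^ k) := by
          gcongr
          · exact probNontrivial_nonneg _ block_nonneg k
          · exact_mod_cast Nat.card_pos
          · exact card_range_posHom_le M d
          · exact probNontrivial_range_posHom_le hP hsum d k
      _ = Real.log (Nat.factorial d) * (d * (d - 1) / 2) * (∑ j : M, P j ^ 2) ^ k :=
          (mul_assoc _ _ _).symm
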